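/- For γ_v > 0, the expected return R = ∫₀^{1/2} (−γ_v) dr + ∫_{1/2}^{1} ((1−r)/r)·γ_v dr of a malicious voter equals −(log(1/2) + 1)·γ_v, equivalently (log 2 − 1)·γ_v. -/

import Mathlib

theorem integral_const_sub_div_self {a b : ℝ} (c : ℝ) (h : (0 : ℝ) ∉ Set.uIcc a b) :
    ∫ x in a..b, (c - x) / x = c * Real.log (b / a) - (b - a) := by
  have hne : ∀ x ∈ Set.uIcc a b, x ≠ 0 := fun x hx => ne_of_mem_of_not_mem hx h
  calc ∫ x in a..b, (c - x) / x
      = ∫ x in a..b, (c * x⁻¹ - 1) := intervalIntegral.integral_congr fun x hx => by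
        rw [sub_div, div_self (hne x hx), div_eq_mul_inv]
    _ = (∫ x in a..b, c * x⁻¹) - ∫ _ in a..b, (1 : ℝ) :=
        intervalIntegral.integral_sub
          ((intervalIntegral.intervalIntegrable_inv hne continuousOn_id).const_mul c)
          intervalIntegrable_const
    _ = c * Real.log (b / a) - (b - a) := by
        rw [intervalIntegral.integral_const_mul, integral_inv h, integral_one]

-- The loss below the threshold `t` cancels the linear part of the gain above it.
theorem malicious_voter_expected_return_eq_general {t : ℝ} (ht : 0 < t) (γv : ℝ) :
    (∫ _r in (0 : ℝ)..t, (-γv)) + (∫ r in t..1, ((1 - r) / r) * γv)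
      = -(Real.log t + 1) * γv := by
  have loss : ∫ _r in (0 : ℝ)..t, (-γv) = -(t * γv) := by
    rw [intervalIntegral.integral_const, sub_zero, smul_eq_mul, mul_neg]
  have gain : ∫ r in t..1, ((1 - r) / r) * γv = (-Real.log t - (1 - t)) * γv := by
    rw [intervalIntegral.integral_mul_const,
      integral_const_sub_div_self 1 (Set.notMem_uIcc_of_lt ht one_pos), one_mul, one_div,
      Real.log_inv]
  rw [loss, gain]
  ring

/-- The expected return of a malicious voter equals `-(log(1/2) + 1) * γ_v`,
equivalently `(log 2 - 1) * γ_v`. -/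
theorem malicious_voter_expected_return_eq (γv : ℝ) (hγ : 0 < γv) :
    (∫ _r in (0:ℝ)..(1/2), (-γv)) + (∫ r in (1/2:ℝ)..1, ((1 - r) / r) * γv)
      = -(Real.log (1/2) + 1) * γv ∧
    (∫ _r in (0:ℝ)..(1/2), (-γv)) + (∫ r in (1/2:ℝ)..1, ((1 - r) / r) * γv)
      = (Real.log 2 - 1) * γv := by
  have h := malicious_voter_expected_return_eq_general one_half_pos γv
  exact ⟨h, h.trans (by rw [one_div, Real.log_inv]; ring)⟩
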